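/- Let d ≥ 2. For all n, m ∈ S^{d-1}, it holds μ( G_n^+ ∩ G_m^- ) = arccos⟪n, m⟫ / (2π), where G_n^+ = { R ∈ SO(d) : ⟪Rn, e_d⟫ > 0 } and G_m^- = { R ∈ SO(d) : ⟪Rm, e_d⟫ < 0 }. -/

import Mathlib

noncomputable section
open MeasureTheory Real Filter
open scoped ENNReal RealInnerProductSpace

instance {m n : Type*} : MeasurableSpace (Matrix m n ℝ) := MeasurableSpace.pi

/-- The special orthogonal group `SO(d)` as matrices. -/
abbrev SOd (d : ℕ) := Matrix.specialOrthogonalGroup (Fin d) ℝ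

/-- The last coordinate `⟪x, e_d⟫` of a vector `x ∈ ℝ^d`. -/
def lastCoord {d : ℕ} (x : EuclideanSpace ℝ (Fin d)) : ℝ :=
  if h : 0 < d then x ⟨d - 1, Nat.sub_lt h Nat.one_pos⟩ else 0

/-- Action of a matrix on `ℝ^d` (Euclidean space) by matrix-vector multiplication. -/
def rotAct {d : ℕ} (R : Matrix (Fin d) (Fin d) ℝ) (x : EuclideanSpace ℝ (Fin d)) :
    EuclideanSpace ℝ (Fin d) :=
  (EuclideanSpace.equiv (Fin d) ℝ).symm (R.mulVec (EuclideanSpace.equiv (Fin d) ℝ x))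

/-- Action of `R ∈ SO(d)` on `ℝ^d`. -/
def rot {d : ℕ} (R : SOd d) (x : EuclideanSpace ℝ (Fin d)) : EuclideanSpace ℝ (Fin d) :=
  rotAct (R : Matrix (Fin d) (Fin d) ℝ) x

/-!
The row `w = Rᵀ e_i` of a random rotation `R` has a rotation-invariant law on Euclidean space, and
`(R x) i = ⟪w, x⟫`. Put `n` and `m`, up to positive factors, at the parameters `0` and `θ` of a
great circle, where `θ` is the angle between them. Rotating the circle does not change the
probability of `⟪w, n⟫ > 0 > ⟪w, m⟫`, so it can be averaged over a full turn. For fixed `w` not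
orthogonal to `n`, the function `t ↦ ⟪w, greatCircle u v t⟫` is a shifted cosine of positive
amplitude, which is positive at `t` and negative at `t + θ` for a set of `t` of length `θ`; Fubini
gives `θ / (2 * π)`. The event `⟪w, n⟫ = 0` is null: by Fubini against Lebesgue measure this holds
for almost every vector in place of `n`, hence by invariance for every nonzero one.
-/

section PlaneRotation

variable {E : Type*} [NormedAddCommGroup E] [InnerProductSpace ℝ E] {u v : E}

/-- The arc-length parametrization `t ↦ cos t • u + sin t • v` of the great circle through two
orthogonal unit vectors `u` and `v`, starting at `u` in the direction of `v`. -/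
def greatCircle (u v : E) (t : ℝ) : E := cos t • u + sin t • v

lemma continuous_greatCircle : Continuous (greatCircle u v) := by
  unfold greatCircle
  fun_prop

@[simp]
lemma greatCircle_zero : greatCircle u v 0 = u := by simp [greatCircle]

lemma inner_greatCircle_right (w : E) (t : ℝ) :
    ⟪w, greatCircle u v t⟫ = cos t * ⟪w, u⟫ + sin t * ⟪w, v⟫ := by
  simp only [greatCircle, inner_add_right, real_inner_smul_right]

lemma inner_greatCircle_greatCircle (hu : ‖u‖ = 1) (hv : ‖v‖ = 1) (huv : ⟪u, v⟫ = 0) (s t : ℝ) :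
    ⟪greatCircle u v s, greatCircle u v t⟫ = cos (s - t) := by
  have hus : ⟪greatCircle u v s, u⟫ = cos s := by
    rw [real_inner_comm, inner_greatCircle_right, real_inner_self_eq_norm_sq, hu, huv]
    ring
  have hvs : ⟪greatCircle u v s, v⟫ = sin s := by
    rw [real_inner_comm, inner_greatCircle_right, real_inner_self_eq_norm_sq, hv,
      real_inner_comm, huv]
    ring
  rw [inner_greatCircle_right, hus, hvs, cos_sub]
  ring

lemma norm_greatCircle (hu : ‖u‖ = 1) (hv : ‖v‖ = 1) (huv : ⟪u, v⟫ = 0) (t : ℝ) :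
    ‖greatCircle u v t‖ = 1 := by
  rw [norm_eq_sqrt_real_inner, inner_greatCircle_greatCircle hu hv huv, sub_self, cos_zero,
    sqrt_one]

lemma reflection_greatCircle (hu : ‖u‖ = 1) (hv : ‖v‖ = 1) (huv : ⟪u, v⟫ = 0) (s t : ℝ) :
    (ℝ ∙ greatCircle u v s)ᗮ.reflection (greatCircle u v t) = greatCircle u v (2 * s - t + π) := by
  obtain ⟨δ, rfl⟩ : ∃ δ, t = s - δ := ⟨s - t, by ring⟩
  have hcos : cos (s + δ + π) = cos (s - δ) - 2 * cos δ * cos s := by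
    rw [cos_add_pi, cos_add, cos_sub]
    ring
  have hsin : sin (s + δ + π) = sin (s - δ) - 2 * cos δ * sin s := by
    rw [sin_add_pi, sin_add, sin_sub]
    ring
  rw [Submodule.reflection_orthogonal_apply, Submodule.reflection_singleton_apply,
    norm_greatCircle hu hv huv, inner_greatCircle_greatCircle hu hv huv, sub_sub_cancel,
    show 2 * s - (s - δ) + π = s + δ + π by ring]
  simp only [greatCircle, hcos, hsin, RCLike.ofReal_real_eq_id, id_eq]
  module

/-- The rotation by the angle `t` in the oriented plane spanned by the orthonormal pair `(u, v)`,
fixing its orthogonal complement; it is encoded as the product of the reflections in the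
hyperplanes orthogonal to two vectors of that plane at angle `t / 2`. -/
def planeRotation (u v : E) (t : ℝ) : E ≃ₗᵢ[ℝ] E :=
  (ℝ ∙ u)ᗮ.reflection.trans (ℝ ∙ greatCircle u v (t / 2))ᗮ.reflection

lemma planeRotation_greatCircle (hu : ‖u‖ = 1) (hv : ‖v‖ = 1) (huv : ⟪u, v⟫ = 0) (t s : ℝ) :
    planeRotation u v t (greatCircle u v s) = greatCircle u v (t + s) := by
  have hfirst := reflection_greatCircle hu hv huv 0 s
  rw [greatCircle_zero] at hfirst
  rw [planeRotation, LinearIsometryEquiv.trans_apply, hfirst, reflection_greatCircle hu hv huv]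
  congr 1
  ring

lemma exists_norm_eq_one_smul_eq {F : Type*} [NormedAddCommGroup F] [NormedSpace ℝ F]
    [Nontrivial F] (x : F) : ∃ y : F, ‖y‖ = 1 ∧ ‖x‖ • y = x := by
  rcases eq_or_ne x 0 with rfl | hx
  · obtain ⟨y, hy⟩ := exists_norm_eq F zero_le_one
    exact ⟨y, hy, by simp⟩
  · exact ⟨‖x‖⁻¹ • x, norm_smul_inv_norm hx, by simp [smul_smul, hx]⟩

variable [FiniteDimensional ℝ E]

lemma det_reflection_orthogonal_singleton {w : E} (hw : w ≠ 0) :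
    LinearMap.det (ℝ ∙ w)ᗮ.reflection.toLinearMap = -1 := by
  rw [Submodule.det_reflection, Submodule.orthogonal_orthogonal, finrank_span_singleton hw, pow_one]

lemma det_planeRotation (hu : ‖u‖ = 1) (hv : ‖v‖ = 1) (huv : ⟪u, v⟫ = 0) (t : ℝ) :
    LinearMap.det (planeRotation u v t).toLinearMap = 1 := by
  have hu₀ : u ≠ 0 := norm_ne_zero_iff.1 (by simp [hu])
  have hw₀ : greatCircle u v (t / 2) ≠ 0 :=
    norm_ne_zero_iff.1 (by simp [norm_greatCircle hu hv huv])
  calc LinearMap.det (planeRotation u v t).toLinearMap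
      = LinearMap.det ((ℝ ∙ greatCircle u v (t / 2))ᗮ.reflection.toLinearMap ∘ₗ
          (ℝ ∙ u)ᗮ.reflection.toLinearMap) := rfl
    _ = 1 := by
      rw [LinearMap.det_comp, det_reflection_orthogonal_singleton hu₀,
        det_reflection_orthogonal_singleton hw₀]
      norm_num

lemma nontrivial_orthogonal_singleton (hE : 2 ≤ Module.finrank ℝ E) (u : E) :
    Nontrivial (ℝ ∙ u)ᗮ := by
  have hsum := (ℝ ∙ u).finrank_add_finrank_orthogonal
  have hle : Module.finrank ℝ (ℝ ∙ u) ≤ 1 := by simpa using finrank_span_le_card (R := ℝ) {u}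
  exact Module.finrank_pos_iff.1 (by omega : 0 < Module.finrank ℝ (ℝ ∙ u)ᗮ)

lemma exists_eq_norm_smul_greatCircle (hE : 2 ≤ Module.finrank ℝ E) (hu : ‖u‖ = 1) (m : E) :
    ∃ v : E, ‖v‖ = 1 ∧ ⟪u, v⟫ = 0 ∧
      m = ‖m‖ • greatCircle u v (InnerProductGeometry.angle u m) := by
  set θ := InnerProductGeometry.angle u m
  have hcos : ‖m‖ * cos θ = ⟪u, m⟫ := by
    rw [← InnerProductGeometry.cos_angle_mul_norm_mul_norm u m, hu]
    ring
  have hproj : ⟪u, m - ⟪u, m⟫ • u⟫ = 0 := by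
    rw [inner_sub_right, real_inner_smul_right, real_inner_self_eq_norm_sq, hu]
    ring
  have hsin : ‖m - ⟪u, m⟫ • u‖ = ‖m‖ * sin θ := by
    refine (sq_eq_sq₀ (norm_nonneg _)
      (mul_nonneg (norm_nonneg m) (InnerProductGeometry.sin_angle_nonneg u m))).1 ?_
    rw [norm_sub_sq_real, real_inner_smul_right, norm_smul, hu, mul_one, norm_eq_abs, sq_abs,
      real_inner_comm u m, ← hcos, mul_pow _ (sin θ), sin_sq]
    ring
  have := nontrivial_orthogonal_singleton hE u
  obtain ⟨v, hv, hmv⟩ := exists_norm_eq_one_smul_eq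
    (⟨m - ⟪u, m⟫ • u, Submodule.mem_orthogonal_singleton_iff_inner_right.2 hproj⟩ : (ℝ ∙ u)ᗮ)
  have hmv' : (‖m‖ * sin θ) • (v : E) = m - ⟪u, m⟫ • u := by
    rw [← hsin]
    exact congrArg Subtype.val hmv
  refine ⟨v, hv, Submodule.mem_orthogonal_singleton_iff_inner_right.1 v.2, ?_⟩
  rw [greatCircle, smul_add, smul_smul, smul_smul, hmv', hcos]
  abel

end PlaneRotation

section Circle

lemma cos_mul_re_add_sin_mul_im (z : ℂ) (t : ℝ) :
    cos t * z.re + sin t * z.im = ‖z‖ * cos (t - z.arg) := by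
  rw [cos_sub, ← z.norm_mul_cos_arg, ← z.norm_mul_sin_arg]
  ring

lemma volume_inter_Ioc_of_periodic {s : Set ℝ} (hs : MeasurableSet s) {T : ℝ} (hT : 0 < T)
    (hper : Function.Periodic (· ∈ s) T) (a b : ℝ) :
    volume (s ∩ Set.Ioc a (a + T)) = volume (s ∩ Set.Ioc b (b + T)) := by
  refine (isAddFundamentalDomain_Ioc hT a).measure_set_eq (isAddFundamentalDomain_Ioc hT b) hs ?_
  rintro ⟨_, k, rfl⟩
  ext x
  exact iff_of_eq ((congrArg (· ∈ s) (add_comm _ _)).trans (hper.zsmul k x))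

lemma cos_pos_cos_add_neg_inter_Ioc_eq_Ioo {θ : ℝ} (h₀ : 0 ≤ θ) (hπ : θ ≤ π) (ψ : ℝ) :
    {t | 0 < cos (t - ψ) ∧ cos (t + θ - ψ) < 0} ∩ Set.Ioc (ψ - π / 2) (ψ - π / 2 + 2 * π) =
      Set.Ioo (ψ + π / 2 - θ) (ψ + π / 2) := by
  ext t
  simp only [Set.mem_inter_iff, Set.mem_ofPred_eq, Set.mem_Ioc, Set.mem_Ioo]
  constructor
  · rintro ⟨⟨hpos, hneg⟩, hlo, hhi⟩
    have hlt : t < ψ + π / 2 := by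
      contrapose! hpos
      exact cos_nonpos_of_pi_div_two_le_of_le (by linarith) (by linarith)
    refine ⟨?_, hlt⟩
    contrapose! hneg
    exact cos_nonneg_of_neg_pi_div_two_le_of_le (by linarith) (by linarith)
  · rintro ⟨hlo, hhi⟩
    refine ⟨⟨cos_pos_of_mem_Ioo ⟨by linarith, by linarith⟩,
      cos_neg_of_pi_div_two_lt_of_lt (by linarith) (by linarith)⟩, by linarith, by linarith⟩

lemma volume_cos_pos_cos_add_neg_inter_Ioc {θ : ℝ} (h₀ : 0 ≤ θ) (hπ : θ ≤ π) (ψ a : ℝ) :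
    volume ({t | 0 < cos (t - ψ) ∧ cos (t + θ - ψ) < 0} ∩ Set.Ioc a (a + 2 * π)) =
      ENNReal.ofReal θ := by
  have hmeas : MeasurableSet {t | 0 < cos (t - ψ) ∧ cos (t + θ - ψ) < 0} := by
    rw [Set.ofPred_and]
    exact .inter (measurableSet_lt measurable_const (by fun_prop))
      (measurableSet_lt (by fun_prop) measurable_const)
  have hper : Function.Periodic (· ∈ {t | 0 < cos (t - ψ) ∧ cos (t + θ - ψ) < 0}) (2 * π) := by
    intro t
    simp only [Set.mem_ofPred_eq, add_right_comm t (2 * π) θ, add_sub_right_comm _ (2 * π) ψ,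
      cos_add_two_pi]
  rw [volume_inter_Ioc_of_periodic hmeas two_pi_pos hper a (ψ - π / 2),
    cos_pos_cos_add_neg_inter_Ioc_eq_Ioo h₀ hπ, Real.volume_Ioo, sub_sub_cancel]

lemma volume_inner_greatCircle_pos_neg_inter_Ioc {E : Type*} [NormedAddCommGroup E]
    [InnerProductSpace ℝ E] {u v w : E} (hw : ⟪w, u⟫ ≠ 0) {θ : ℝ} (h₀ : 0 ≤ θ) (hπ : θ ≤ π)
    (a : ℝ) :
    volume ({t | 0 < ⟪w, greatCircle u v t⟫ ∧ ⟪w, greatCircle u v (t + θ)⟫ < 0} ∩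
      Set.Ioc a (a + 2 * π)) = ENNReal.ofReal θ := by
  let z : ℂ := ⟨⟪w, u⟫, ⟪w, v⟫⟩
  have hz : 0 < ‖z‖ := norm_pos_iff.2 fun h => hw (congrArg Complex.re h)
  have hpolar (t : ℝ) : ⟪w, greatCircle u v t⟫ = ‖z‖ • cos (t - z.arg) :=
    (inner_greatCircle_right w t).trans (cos_mul_re_add_sin_mul_im z t)
  simp only [hpolar, smul_pos_iff_of_pos_left hz, smul_neg_iff_of_pos_left hz]
  exact volume_cos_pos_cos_add_neg_inter_Ioc h₀ hπ z.arg a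

end Circle

section RotationInvariant

variable {E : Type*} [NormedAddCommGroup E] [InnerProductSpace ℝ E] [MeasurableSpace E]

lemma measurableSet_inner_pos_neg [OpensMeasurableSpace E] [SecondCountableTopology E]
    {α : Type*} [MeasurableSpace α] {f g h : α → E} (hf : Measurable f) (hg : Measurable g)
    (hh : Measurable h) :
    MeasurableSet {a | 0 < ⟪f a, g a⟫ ∧ ⟪f a, h a⟫ < 0} := by
  rw [Set.ofPred_and]
  exact (measurableSet_lt measurable_const (hf.inner hg)).inter
    (measurableSet_lt (hf.inner hh) measurable_const)

/-- A measure on a Euclidean space is rotation invariant if every linear isometry of determinant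
one preserves it. -/
def IsRotationInvariant (ν : Measure E) : Prop :=
  ∀ φ : E ≃ₗᵢ[ℝ] E, LinearMap.det φ.toLinearMap = 1 → MeasurePreserving φ ν ν

variable [BorelSpace E] {ν : Measure E}

lemma IsRotationInvariant.measure_inner_map (hν : IsRotationInvariant ν) {φ : E ≃ₗᵢ[ℝ] E}
    (hφ : LinearMap.det φ.toLinearMap = 1) (p : ℝ → ℝ → Prop) (x y : E) :
    ν {w | p ⟪w, φ x⟫ ⟪w, φ y⟫} = ν {w | p ⟪w, x⟫ ⟪w, y⟫} := by
  rw [← (hν φ hφ).measure_preimage_equiv (f := φ.toHomeomorph.toMeasurableEquiv)]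
  have hpre : φ.toHomeomorph.toMeasurableEquiv ⁻¹' {w | p ⟪w, φ x⟫ ⟪w, φ y⟫} =
      {w | p ⟪φ w, φ x⟫ ⟪φ w, φ y⟫} := rfl
  simp only [hpre, φ.inner_map_map]

variable [FiniteDimensional ℝ E]

lemma volume_inner_eq_zero {w : E} (hw : w ≠ 0) : volume {x : E | ⟪w, x⟫ = 0} = 0 := by
  have hne : (innerₛₗ ℝ w).ker ≠ ⊤ := fun h =>
    hw (inner_self_eq_zero.1 (LinearMap.mem_ker.1 (h ▸ Submodule.mem_top : w ∈ (innerₛₗ ℝ w).ker)))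
  exact Measure.addHaar_submodule volume _ hne

lemma exists_measure_inner_eq_zero [Nontrivial E] [SFinite ν] (h₀ : ν {0} = 0) :
    ∃ x : E, x ≠ 0 ∧ ν {w | ⟪w, x⟫ = 0} = 0 := by
  have hmeas : MeasurableSet {p : E × E | ⟪p.2, p.1⟫ = 0} :=
    measurableSet_eq_fun (measurable_snd.inner measurable_fst) measurable_const
  have hnull : (volume.prod ν) {p : E × E | ⟪p.2, p.1⟫ = 0} = 0 := by
    rw [Measure.prod_apply_symm hmeas]
    refine lintegral_eq_zero_of_ae_eq_zero ?_
    filter_upwards [compl_mem_ae_iff.2 h₀] with w hw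
    exact volume_inner_eq_zero hw
  have hae : ∀ᵐ x : E, x ≠ 0 ∧ ν {w | ⟪w, x⟫ = 0} = 0 :=
    (Measure.ae_ne volume 0).and (Measure.measure_ae_null_of_prod_null hnull)
  exact hae.exists

namespace IsRotationInvariant

lemma measure_inner_eq_zero [SFinite ν] (hν : IsRotationInvariant ν)
    (hE : 2 ≤ Module.finrank ℝ E) (h₀ : ν {0} = 0) {u : E} (hu : ‖u‖ = 1) :
    ν {w | ⟪w, u⟫ = 0} = 0 := by
  have : Nontrivial E := Module.nontrivial_of_finrank_pos (R := ℝ) (by omega)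
  obtain ⟨x, hx, hnull⟩ := exists_measure_inner_eq_zero (ν := ν) h₀
  obtain ⟨v, hv, huv, hxv⟩ := exists_eq_norm_smul_greatCircle hE hu x
  set θ := InnerProductGeometry.angle u x
  have hrot : planeRotation u v θ u = greatCircle u v θ := by
    simpa using planeRotation_greatCircle hu hv huv θ 0
  have hinner (w : E) : ⟪w, x⟫ = 0 ↔ ⟪w, planeRotation u v θ u⟫ = 0 := by
    rw [hxv, real_inner_smul_right, hrot, mul_eq_zero, or_iff_right (norm_ne_zero_iff.2 hx)]
  simp only [hinner] at hnull
  rwa [hν.measure_inner_map (det_planeRotation hu hv huv θ) (fun a _ => a = 0) u u] at hnull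

lemma measure_inner_greatCircle_add (hν : IsRotationInvariant ν) {u v : E} (hu : ‖u‖ = 1)
    (hv : ‖v‖ = 1) (huv : ⟪u, v⟫ = 0) (p : ℝ → ℝ → Prop) (θ t : ℝ) :
    ν {w | p ⟪w, greatCircle u v t⟫ ⟪w, greatCircle u v (t + θ)⟫} =
      ν {w | p ⟪w, u⟫ ⟪w, greatCircle u v θ⟫} := by
  have hrot : planeRotation u v t u = greatCircle u v t := by
    simpa using planeRotation_greatCircle hu hv huv t 0
  rw [← hrot, ← planeRotation_greatCircle hu hv huv,
    hν.measure_inner_map (det_planeRotation hu hv huv t)]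

lemma measure_inner_greatCircle_pos_neg [SFinite ν] (hν : IsRotationInvariant ν)
    (hE : 2 ≤ Module.finrank ℝ E) (h₀ : ν {0} = 0) {u v : E} (hu : ‖u‖ = 1) (hv : ‖v‖ = 1)
    (huv : ⟪u, v⟫ = 0) {θ : ℝ} (hθ₀ : 0 ≤ θ) (hθ : θ ≤ π) :
    ν {w | 0 < ⟪w, u⟫ ∧ ⟪w, greatCircle u v θ⟫ < 0} =
      ν Set.univ * ENNReal.ofReal (θ / (2 * π)) := by
  set I := Set.Ioc 0 (0 + 2 * π)
  let B : Set (E × ℝ) :=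
    {p | 0 < ⟪p.1, greatCircle u v p.2⟫ ∧ ⟪p.1, greatCircle u v (p.2 + θ)⟫ < 0}
  have hB : MeasurableSet B := by
    have hcircle : Measurable (greatCircle u v) := continuous_greatCircle.measurable
    exact measurableSet_inner_pos_neg measurable_fst (hcircle.comp measurable_snd)
      (hcircle.comp (measurable_snd.add_const θ))
  have hslice (t : ℝ) : ν ((·, t) ⁻¹' B) = ν {w | 0 < ⟪w, u⟫ ∧ ⟪w, greatCircle u v θ⟫ < 0} :=
    hν.measure_inner_greatCircle_add hu hv huv (fun a b => 0 < a ∧ b < 0) θ t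
  have horbit : ∀ᵐ w ∂ν, volume.restrict I (Prod.mk w ⁻¹' B) = ENNReal.ofReal θ := by
    filter_upwards [measure_eq_zero_iff_ae_notMem.1 (hν.measure_inner_eq_zero hE h₀ hu)] with w hw
    rw [Measure.restrict_apply (measurable_prodMk_left hB)]
    exact volume_inner_greatCircle_pos_neg_inter_Ioc hw hθ₀ hθ 0
  have hfubini : ν {w | 0 < ⟪w, u⟫ ∧ ⟪w, greatCircle u v θ⟫ < 0} * ENNReal.ofReal (2 * π) =
      ν Set.univ * ENNReal.ofReal θ := calc
    _ = ∫⁻ t in I, ν ((·, t) ⁻¹' B) := by simp [hslice, I]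
    _ = ∫⁻ w, volume.restrict I (Prod.mk w ⁻¹' B) ∂ν := by
      rw [← Measure.prod_apply_symm hB, Measure.prod_apply hB]
    _ = ν Set.univ * ENNReal.ofReal θ := by
      rw [lintegral_congr_ae horbit, lintegral_const, mul_comm]
  rw [ENNReal.ofReal_div_of_pos two_pi_pos, ← mul_div_assoc,
    ENNReal.eq_div_iff (by simp [pi_pos]) ENNReal.ofReal_ne_top, mul_comm, hfubini]

theorem measure_inner_pos_neg [SFinite ν] (hν : IsRotationInvariant ν)
    (hE : 2 ≤ Module.finrank ℝ E) (h₀ : ν {0} = 0) {n m : E} (hn : n ≠ 0) (hm : m ≠ 0) :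
    ν {w | 0 < ⟪w, n⟫ ∧ ⟪w, m⟫ < 0} =
      ν Set.univ * ENNReal.ofReal (InnerProductGeometry.angle n m / (2 * π)) := by
  have hn' : 0 < ‖n‖⁻¹ := inv_pos.2 (norm_pos_iff.2 hn)
  have hu : ‖‖n‖⁻¹ • n‖ = 1 := norm_smul_inv_norm hn
  obtain ⟨v, hv, huv, hmv⟩ := exists_eq_norm_smul_greatCircle hE hu m
  rw [InnerProductGeometry.angle_smul_left_of_pos _ _ hn'] at hmv
  rw [← hν.measure_inner_greatCircle_pos_neg hE h₀ hu hv huv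
    (InnerProductGeometry.angle_nonneg n m) (InnerProductGeometry.angle_le_pi n m)]
  congr! 3 with w
  rw [real_inner_smul_right, mul_pos_iff_of_pos_left hn']
  nth_rw 1 [hmv]
  rw [real_inner_smul_right, ← smul_eq_mul, smul_neg_iff_of_pos_left (norm_pos_iff.2 hm)]

end IsRotationInvariant

end RotationInvariant

section SpecialOrthogonalGroup

variable {ι : Type*} [Fintype ι] [DecidableEq ι]

/-- The `i`-th row of a special orthogonal matrix as a vector of Euclidean space: the linear form
`x ↦ (R x) i` is the inner product with `rowVector i R`. -/
def rowVector (i : ι) (R : Matrix.specialOrthogonalGroup ι ℝ) : EuclideanSpace ℝ ι :=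
  WithLp.toLp 2 ((R : Matrix ι ι ℝ) i)

lemma inner_rowVector (i : ι) (R : Matrix.specialOrthogonalGroup ι ℝ) (x : EuclideanSpace ℝ ι) :
    ⟪rowVector i R, x⟫ = (R : Matrix ι ι ℝ).mulVec x.ofLp i := by
  simp [PiLp.inner_apply, rowVector, Matrix.mulVec, dotProduct, mul_comm]

lemma rowVector_ne_zero (i : ι) (R : Matrix.specialOrthogonalGroup ι ℝ) : rowVector i R ≠ 0 := by
  have hR : (R : Matrix ι ι ℝ) * (R : Matrix ι ι ℝ).transpose = 1 :=
    (Matrix.mem_orthogonalGroup_iff ι ℝ).1 (Matrix.mem_specialOrthogonalGroup_iff.1 R.2).1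
  have hself : ⟪rowVector i R, rowVector i R⟫ = 1 := calc
    _ = ((R : Matrix ι ι ℝ) * (R : Matrix ι ι ℝ).transpose) i i := inner_rowVector i R _
    _ = 1 := by rw [hR, Matrix.one_apply_eq]
  exact inner_self_ne_zero.1 (hself ▸ one_ne_zero)

lemma measurable_specialOrthogonalGroup_entry (i j : ι) :
    Measurable fun R : Matrix.specialOrthogonalGroup ι ℝ => (R : Matrix ι ι ℝ) i j :=
  (measurable_pi_apply j).comp ((measurable_pi_apply i).comp measurable_subtype_coe)

lemma measurable_rowVector (i : ι) : Measurable (rowVector i) :=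
  (WithLp.measurable_toLp 2 _).comp
    (measurable_pi_lambda _ fun j => measurable_specialOrthogonalGroup_entry i j)

lemma measurable_specialOrthogonalGroup_mul_right (T : Matrix.specialOrthogonalGroup ι ℝ) :
    Measurable fun R : Matrix.specialOrthogonalGroup ι ℝ => R * T := by
  refine Measurable.subtype_mk (measurable_pi_lambda _ fun i => measurable_pi_lambda _ fun j => ?_)
  exact Finset.measurable_sum _ fun k _ => (measurable_specialOrthogonalGroup_entry i k).mul_const _

lemma exists_rowVector_mul (φ : EuclideanSpace ℝ ι ≃ₗᵢ[ℝ] EuclideanSpace ℝ ι)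
    (hφ : LinearMap.det φ.toLinearMap = 1) :
    ∃ T : Matrix.specialOrthogonalGroup ι ℝ, ∀ i R, rowVector i (R * T) = φ (rowVector i R) := by
  let b := EuclideanSpace.basisFun ι ℝ
  let M := LinearMap.toMatrix b.toBasis b.toBasis φ.toLinearMap
  have hM : M ∈ Matrix.unitaryGroup ι ℝ := φ.toMatrix_mem_unitaryGroup b b
  have hdet : M.det = 1 := by rw [LinearMap.det_toMatrix, hφ]
  have hT : M.transpose ∈ Matrix.specialOrthogonalGroup ι ℝ := by
    refine Matrix.mem_specialOrthogonalGroup_iff.2 ⟨?_, by rw [Matrix.det_transpose, hdet]⟩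
    rw [Matrix.mem_orthogonalGroup_iff, Matrix.transpose_transpose]
    exact Matrix.mem_unitaryGroup_iff'.1 hM
  refine ⟨⟨M.transpose, hT⟩, fun i R => ?_⟩
  have hφ_mulVec : M.mulVec (rowVector i R).ofLp = (φ (rowVector i R)).ofLp :=
    LinearMap.toMatrix_mulVec_repr b.toBasis b.toBasis φ.toLinearMap (rowVector i R)
  calc rowVector i (R * ⟨M.transpose, hT⟩)
      = WithLp.toLp 2 (Matrix.vecMul (rowVector i R).ofLp M.transpose) := rfl
    _ = φ (rowVector i R) := by rw [Matrix.vecMul_transpose, hφ_mulVec]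

lemma isRotationInvariant_map_rowVector {μ : Measure (Matrix.specialOrthogonalGroup ι ℝ)}
    (hμ : ∀ T, μ.map (fun R => R * T) = μ) (i : ι) :
    IsRotationInvariant (μ.map (rowVector i)) := by
  intro φ hφ
  obtain ⟨T, hT⟩ := exists_rowVector_mul φ hφ
  refine ⟨φ.continuous.measurable, ?_⟩
  conv_rhs => rw [← hμ T]
  rw [Measure.map_map φ.continuous.measurable (measurable_rowVector i),
    Measure.map_map (measurable_rowVector i) (measurable_specialOrthogonalGroup_mul_right T)]
  exact congrArg (μ.map ·) (funext fun R => (hT i R).symm)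

theorem haar_measure_plus_minus_general (hι : 2 ≤ Fintype.card ι)
    (μ : Measure (Matrix.specialOrthogonalGroup ι ℝ)) [SFinite μ]
    (hμ : ∀ T, μ.map (fun R => R * T) = μ) (i : ι) {n m : EuclideanSpace ℝ ι}
    (hn : n ≠ 0) (hm : m ≠ 0) :
    μ {R | 0 < (R : Matrix ι ι ℝ).mulVec n.ofLp i ∧ (R : Matrix ι ι ℝ).mulVec m.ofLp i < 0} =
      μ Set.univ * ENNReal.ofReal (InnerProductGeometry.angle n m / (2 * π)) := by
  have hrow : Measurable (rowVector i) := measurable_rowVector i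
  have hwedge : MeasurableSet {w : EuclideanSpace ℝ ι | 0 < ⟪w, n⟫ ∧ ⟪w, m⟫ < 0} :=
    measurableSet_inner_pos_neg measurable_id measurable_const measurable_const
  have hzero : μ.map (rowVector i) {0} = 0 := by
    rw [Measure.map_apply hrow (measurableSet_singleton 0),
      Set.preimage_singleton_eq_empty.2 fun ⟨R, hR⟩ => rowVector_ne_zero i R hR, measure_empty]
  have hlaw := (isRotationInvariant_map_rowVector hμ i).measure_inner_pos_neg
    (by rwa [finrank_euclideanSpace]) hzero hn hm
  rw [Measure.map_apply hrow hwedge, Measure.map_apply hrow .univ] at hlaw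
  simpa only [Set.preimage_ofPred_eq, Set.preimage_univ, inner_rowVector] using hlaw

end SpecialOrthogonalGroup

lemma lastCoord_rot {d : ℕ} (hd : 0 < d) (R : SOd d) (x : EuclideanSpace ℝ (Fin d)) :
    lastCoord (rot R x) =
      (R : Matrix (Fin d) (Fin d) ℝ).mulVec x.ofLp ⟨d - 1, Nat.sub_lt hd Nat.one_pos⟩ :=
  dif_pos hd

/-!
STATEMENT 10 (claim (claim:measbis) in the proof of Lemma 3.2):
μ(G_n^+ ∩ G_m^-) = arccos⟪n,m⟫/(2π), where G_n^+ = {R : ⟪Rn,e_d⟫ > 0} and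
G_m^- = {R : ⟪Rm,e_d⟫ < 0}.
-/

theorem haar_measure_plus_minus
    (d : ℕ) (hd : 2 ≤ d)
    (μ : Measure (SOd d)) [IsProbabilityMeasure μ]
    (hμleft : ∀ R₀ : SOd d, μ.map (fun R => R₀ * R) = μ)
    (hμright : ∀ R₀ : SOd d, μ.map (fun R => R * R₀) = μ)
    (n m : EuclideanSpace ℝ (Fin d)) (hn : ‖n‖ = 1) (hm : ‖m‖ = 1) :
    μ {R : SOd d | 0 < lastCoord (rot R n) ∧ lastCoord (rot R m) < 0} =
      ENNReal.ofReal (Real.arccos ⟪n, m⟫ / (2 * π)) := by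
  have hd₀ : 0 < d := by omega
  simpa [lastCoord_rot hd₀, InnerProductGeometry.angle, hn, hm] using
    haar_measure_plus_minus_general (by simpa) μ hμright ⟨d - 1, Nat.sub_lt hd₀ Nat.one_pos⟩
      (ne_zero_of_norm_ne_zero (hn.trans_ne one_ne_zero))
      (ne_zero_of_norm_ne_zero (hm.trans_ne one_ne_zero))
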